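/- Let k be a field of characteristic 2 and let a₄, a₆ ∈ k. There exists a derivation D : k → k with a₄·(D a₄)² + (D a₆)² ≠ 0 if and only if a₄ is not a square in k or a₆ is not a square in k. Equivalently: (a₄ ∈ k² and a₆ ∈ k²) if and only if a₄·(D a₄)² + (D a₆)² = 0 for every derivation D : k → k. -/

import Mathlib

/-!
Squares are killed by every derivation in characteristic 2, so `Ψ = 0` if `a₄` and `a₆` are both
squares. Conversely, every non-square `a` satisfies `D a = 1` for some derivation `D`
(`exists_derivation_eq_one`). If `a₄` is not a square, take `D a₄ = 1`; then `Ψ = 0` would give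
`a₄ = (D a₆)²`. If `a₄` is a square, then `D a₄ = 0`, so `Ψ = (D a₆)²`, and one takes `D a₆ = 1`.

To construct `D`, let `F` be maximal among the subrings of `k` which contain all squares and do not
contain `a`. Such an `F` is a field, since `y⁻¹ = y * (y⁻¹)²`. If `b ∉ F`, then `F + b F` is a
larger subring, hence contains `a`; solving for `b` shows `b ∈ F + a F`. So `k = F ⊕ a F`, and
`x + a y ↦ y` is a derivation because `a² ∈ F` and `2 = 0`.
-/

section

variable {k : Type*} [Field k]

/-- A subring containing all squares is closed under inversion. -/
lemma inv_mem_of_sq_mem {F : Subring k} (hF : ∀ x : k, x ^ 2 ∈ F) {y : k} (hy : y ∈ F) :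
    y⁻¹ ∈ F := by
  by_cases h : y = 0
  · simp [h]
  · have : y⁻¹ = y * y⁻¹ ^ 2 := by field_simp
    rw [this]
    exact F.mul_mem hy (hF _)

/-- The subring `F + b F`, where `F` contains `b ^ 2`. -/
def adjoinSqrt (F : Subring k) (b : k) (hb : b ^ 2 ∈ F) : Subring k where
  carrier := {z | ∃ x ∈ F, ∃ y ∈ F, z = x + b * y}
  zero_mem' := ⟨0, F.zero_mem, 0, F.zero_mem, by ring⟩
  one_mem' := ⟨1, F.one_mem, 0, F.zero_mem, by ring⟩
  add_mem' := by
    rintro _ _ ⟨x, hx, y, hy, rfl⟩ ⟨x', hx', y', hy', rfl⟩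
    exact ⟨x + x', F.add_mem hx hx', y + y', F.add_mem hy hy', by ring⟩
  neg_mem' := by
    rintro _ ⟨x, hx, y, hy, rfl⟩
    exact ⟨-x, F.neg_mem hx, -y, F.neg_mem hy, by ring⟩
  mul_mem' := by
    rintro _ _ ⟨x, hx, y, hy, rfl⟩ ⟨x', hx', y', hy', rfl⟩
    exact ⟨x * x' + b ^ 2 * (y * y'),
      F.add_mem (F.mul_mem hx hx') (F.mul_mem hb (F.mul_mem hy hy')),
      x * y' + x' * y, F.add_mem (F.mul_mem hx hy') (F.mul_mem hx' hy), by ring⟩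

variable [CharP k 2]

/-- For a non-square `a`, the field `k` is `F + a F` for some subring `F` containing all squares
but not `a`. -/
lemma exists_subring_complement {a : k} (ha : ¬ IsSquare a) :
    ∃ F : Subring k, (∀ x : k, x ^ 2 ∈ F) ∧ a ∉ F ∧
      ∀ b : k, ∃ x ∈ F, ∃ y ∈ F, b = x + a * y := by
  obtain ⟨F, hF₀, hF⟩ := zorn_le_nonempty₀ {F : Subring k | a ∉ F}
    (fun c hc hchain F₁ hF₁ => by
      refine ⟨sSup c, ?_, fun z hz => le_sSup hz⟩
      intro h
      obtain ⟨G, hG, haG⟩ :=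
        (Subring.mem_sSup_of_directedOn ⟨F₁, hF₁⟩ hchain.directedOn).1 h
      exact hc hG haG)
    (frobenius k 2).range
    (by
      rintro ⟨x, hx⟩
      exact ha ⟨x, by rw [← hx, frobenius_def, sq]⟩)
  have hsq : ∀ x : k, x ^ 2 ∈ F := fun x => hF₀ ⟨x, frobenius_def 2 x⟩
  have haF : a ∉ F := hF.prop
  refine ⟨F, hsq, haF, fun b => ?_⟩
  by_cases hb : b ∈ F
  · exact ⟨b, hb, 0, F.zero_mem, by ring⟩
  have hle : F ≤ adjoinSqrt F b (hsq b) := fun x hx => ⟨x, hx, 0, F.zero_mem, by ring⟩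
  have hmem : a ∈ adjoinSqrt F b (hsq b) := by
    by_contra h
    exact hb (hF.le_of_ge h hle ⟨0, F.zero_mem, 1, F.one_mem, by ring⟩)
  obtain ⟨x, hx, y, hy, hxy⟩ := hmem
  have hy0 : y ≠ 0 := by
    rintro rfl
    exact haF (by simpa [hxy] using hx)
  have hyi := inv_mem_of_sq_mem hsq hy
  refine ⟨-(x * y⁻¹), F.neg_mem (F.mul_mem hx hyi), y⁻¹, hyi, ?_⟩
  rw [hxy]
  field_simp
  ring

lemma exists_derivation_eq_one {a : k} (ha : ¬ IsSquare a) :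
    ∃ D : Derivation ℤ k k, D a = 1 := by
  obtain ⟨F, hsq, haF, hdec⟩ := exists_subring_complement ha
  choose p hp q hq hpq using hdec
  have huniq : ∀ {b x y : k}, x ∈ F → y ∈ F → b = x + a * y → q b = y := by
    intro b x y hx hy h
    by_contra hne
    have h0 : q b - y ≠ 0 := sub_ne_zero.2 hne
    have : a = (x - p b) * (q b - y)⁻¹ := by
      rw [eq_mul_inv_iff_mul_eq₀ h0]
      linear_combination h - hpq b
    exact haF (this ▸ F.mul_mem (F.sub_mem hx (hp b))
      (inv_mem_of_sq_mem hsq (F.sub_mem (hq b) hy)))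
  have hadd : ∀ b c, q (b + c) = q b + q c := fun b c =>
    huniq (F.add_mem (hp b) (hp c)) (F.add_mem (hq b) (hq c))
      (by linear_combination hpq b + hpq c)
  have h2 : (2 : k) = 0 := CharTwo.two_eq_zero
  refine ⟨Derivation.mk' (AddMonoidHom.mk' q hadd).toIntLinearMap fun b c => ?_,
    huniq F.zero_mem F.one_mem (by ring)⟩
  change q (b * c) = b * q c + c * q b
  have hmul : q (b * c) = p b * q c + p c * q b :=
    huniq (F.add_mem (F.mul_mem (hp b) (hp c)) (F.mul_mem (hsq a) (F.mul_mem (hq b) (hq c))))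
      (F.add_mem (F.mul_mem (hp b) (hq c)) (F.mul_mem (hp c) (hq b)))
      (by linear_combination c * hpq b + (p b + a * q b) * hpq c)
  -- The two sides differ by `2 * a * q b * q c`.
  linear_combination hmul - q c * hpq b - q b * hpq c - a * q b * q c * h2

lemma derivation_eq_zero_of_isSquare (D : Derivation ℤ k k) {a : k} (ha : IsSquare a) :
    D a = 0 := by
  obtain ⟨r, rfl⟩ := ha
  rw [D.leibniz, CharTwo.add_self_eq_zero]

end

/-- Over a field `k` of characteristic `2` and elements `a₄, a₆ ∈ k`: there exists a derivation
`D : k → k` with quasi-discriminant `Ψ = a₄·(D a₄)² + (D a₆)² ≠ 0` if and only if `a₄` is not a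
square or `a₆` is not a square; equivalently, `a₄` and `a₆` are both squares if and only if the
quasi-discriminant vanishes for every derivation. -/
theorem stmt4 {k : Type*} [Field k] [CharP k 2] (a₄ a₆ : k) :
    ((∃ D : Derivation ℤ k k, a₄ * (D a₄) ^ 2 + (D a₆) ^ 2 ≠ 0) ↔
      (¬ IsSquare a₄ ∨ ¬ IsSquare a₆)) ∧
    ((IsSquare a₄ ∧ IsSquare a₆) ↔
      ∀ D : Derivation ℤ k k, a₄ * (D a₄) ^ 2 + (D a₆) ^ 2 = 0) := by
  have key : (IsSquare a₄ ∧ IsSquare a₆) ↔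
      ∀ D : Derivation ℤ k k, a₄ * (D a₄) ^ 2 + (D a₆) ^ 2 = 0 := by
    constructor
    · rintro ⟨h₄, h₆⟩ D
      simp [derivation_eq_zero_of_isSquare D h₄, derivation_eq_zero_of_isSquare D h₆]
    · intro h
      have h₄ : IsSquare a₄ := by
        by_contra hn
        obtain ⟨D, hD⟩ := exists_derivation_eq_one hn
        have hΨ := h D
        rw [hD, one_pow, mul_one, CharTwo.add_eq_zero] at hΨ
        exact hn ⟨D a₆, by rw [hΨ, sq]⟩
      refine ⟨h₄, ?_⟩
      by_contra hn
      obtain ⟨D, hD⟩ := exists_derivation_eq_one hn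
      have hΨ := h D
      simp [hD, derivation_eq_zero_of_isSquare D h₄] at hΨ
  refine ⟨?_, key⟩
  rw [← not_and_or, key, not_forall]
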